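/- arXiv:2502.06733 — 7 statements merged into one kernel-verified Lean document; each statement's English description precedes it below -/
import Mathlib

section
/- Under the interpolation setting, let the reweighted gradient descent iterates be θ^{t+1} = θ^t − η·Σ_{i=1}^M w_{i,t} ∇f_i(θ^t) with step size η = 1/(8L), where at each step t the weights satisfy w_{i,t} ≥ 0, Σ_{i=1}^M w_{i,t} = 1, and max_{i} w_{i,t} ≤ 2/M. Then for every T ≥ 1, the averaged iterate θ̄^T = (1/T)·Σ_{t=0}^{T−1} θ^t satisfies f(θ̄^T) − f(θ*) ≤ 8L‖θ^0 − θ*‖²/T + (1/T)·Σ_{t=0}^{T−1} δ^t, where δ^t = Σ_{i=1}^M (1/M − w_{i,t})·(f_i(θ^t) − f_i(θ*)). -/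
open scoped InnerProductSpace BigOperators

theorem grad_sq_bound {E : Type*} [NormedAddCommGroup E] [InnerProductSpace ℝ E]
    (L : ℝ) (hL : 0 < L) (f : E → ℝ) (g : E → E)
    (hconv : ∀ x y : E, f y + ⟪g y, x - y⟫_ℝ ≤ f x)
    (hs : ∀ x y : E, ‖g x - g y‖ ≤ L * ‖x - y‖) (z : E) (hz : ∀ x, f z ≤ f x) (x : E) :
    ‖g x‖ ^ 2 ≤ 4 * L * (f x - f z) := by
  set s : ℝ := 1 / (2 * L) with hsdef
  have hs0 : 0 < s := by positivity
  have hLs : L * s = 1 / 2 := by rw [hsdef]; field_simp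
  set y : E := x - s • g x with hy
  have hxy : x - y = s • g x := by rw [hy]; abel
  have h1 := hconv x y
  rw [hxy, inner_smul_right] at h1
  have h2 := hs x y
  rw [hxy, norm_smul, Real.norm_of_nonneg hs0.le] at h2
  have h3 : ⟪g x - g y, g x⟫_ℝ ≤ ‖g x - g y‖ * ‖g x‖ := real_inner_le_norm _ _
  rw [inner_sub_left, real_inner_self_eq_norm_sq] at h3
  have h4 : ‖g x - g y‖ * ‖g x‖ ≤ (1 / 2) * ‖g x‖ ^ 2 := by
    have := mul_le_mul_of_nonneg_right h2 (norm_nonneg (g x))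
    rw [← mul_assoc, hLs] at this
    nlinarith
  have h5 : (1 / 2) * ‖g x‖ ^ 2 ≤ ⟪g y, g x⟫_ℝ := by linarith
  have h6 := mul_le_mul_of_nonneg_left h5 hs0.le
  have h7 := hz y
  have h8 : s * (1 / 2 * ‖g x‖ ^ 2) ≤ f x - f z := by linarith
  have h9 := mul_le_mul_of_nonneg_left h8 (by positivity : 0 ≤ 4 * L)
  have h10 : 4 * L * (s * (1 / 2 * ‖g x‖ ^ 2)) = ‖g x‖ ^ 2 := by
    linear_combination 2 * ‖g x‖ ^ 2 * hLs
  linarith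

theorem norm_sq_avg {E : Type*} [NormedAddCommGroup E] [InnerProductSpace ℝ E]
    {ι : Type*} [Fintype ι] (w : ι → ℝ) (g : ι → E) (h0 : ∀ i, 0 ≤ w i) (h1 : ∑ i, w i = 1) :
    ‖∑ i, w i • g i‖ ^ 2 ≤ ∑ i, w i * ‖g i‖ ^ 2 := by
  set G := ∑ i, w i • g i with hG
  have e : ‖G‖ ^ 2 = ∑ i, w i * ⟪g i, G⟫_ℝ := by
    rw [← real_inner_self_eq_norm_sq]
    conv_lhs => rw [hG, sum_inner]
    simp only [real_inner_smul_left]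
    rfl
  have b : ∑ i, w i * ⟪g i, G⟫_ℝ ≤ ∑ i, (1 / 2 * (w i * ‖g i‖ ^ 2) + w i * (‖G‖ ^ 2 / 2)) := by
    apply Finset.sum_le_sum
    intro i _
    have : ⟪g i, G⟫_ℝ ≤ (‖g i‖ ^ 2 + ‖G‖ ^ 2) / 2 := by
      have := real_inner_le_norm (g i) G
      nlinarith [sq_nonneg (‖g i‖ - ‖G‖)]
    have := mul_le_mul_of_nonneg_left this (h0 i)
    linarith
  rw [Finset.sum_add_distrib, ← Finset.mul_sum, ← Finset.sum_mul, h1] at b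
  linarith

/-- Reweighted full gradient descent with step size `η = 1/(8L)` under the
interpolation regime: convergence bound for the averaged iterate with the
reweighting excess term `δ^t`. -/
theorem stmt_2 {d M : ℕ} (hM : 0 < M) (L : ℝ) (hL : 0 < L)
    (f : Fin M → EuclideanSpace ℝ (Fin d) → ℝ)
    (hdiff : ∀ i, Differentiable ℝ (f i))
    (hconv : ∀ i, ∀ θ₁ θ₂ : EuclideanSpace ℝ (Fin d),
      f i θ₂ + ⟪gradient (f i) θ₂, θ₁ - θ₂⟫_ℝ ≤ f i θ₁)
    (hsmooth : ∀ i, ∀ θ θ' : EuclideanSpace ℝ (Fin d),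
      ‖gradient (f i) θ - gradient (f i) θ'‖ ≤ L * ‖θ - θ'‖)
    (θstar : EuclideanSpace ℝ (Fin d))
    (hinterp : ∀ i θ, f i θstar ≤ f i θ)
    (w : ℕ → Fin M → ℝ)
    (hw0 : ∀ t i, 0 ≤ w t i)
    (hw1 : ∀ t, ∑ i, w t i = 1)
    (hwmax : ∀ t i, w t i ≤ 2 / (M : ℝ))
    (η : ℝ) (hη : η = 1 / (8 * L))
    (θ : ℕ → EuclideanSpace ℝ (Fin d))
    (hupd : ∀ t, θ (t + 1) = θ t - η • ∑ i, w t i • gradient (f i) (θ t))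
    (T : ℕ) (hT : 1 ≤ T) :
    (1 / (M : ℝ)) * ∑ i, f i ((1 / (T : ℝ)) • ∑ t ∈ Finset.range T, θ t)
        - (1 / (M : ℝ)) * ∑ i, f i θstar
      ≤ 8 * L * ‖θ 0 - θstar‖ ^ 2 / (T : ℝ)
        + (1 / (T : ℝ)) * ∑ t ∈ Finset.range T,
            ∑ i, ((1 / (M : ℝ)) - w t i) * (f i (θ t) - f i θstar) := by
  have hT0 : (0 : ℝ) < T := by exact_mod_cast hT
  have hη0 : 0 < η := by rw [hη]; positivity
  have hLη : L * η = 1 / 8 := by rw [hη]; field_simp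
  -- one-step bound
  have step : ∀ t, ∑ i, w t i * (f i (θ t) - f i θstar)
      ≤ 8 * L * (‖θ t - θstar‖ ^ 2 - ‖θ (t + 1) - θstar‖ ^ 2) := by
    intro t
    set S := ∑ i, w t i * (f i (θ t) - f i θstar) with hS
    set G := ∑ i, w t i • gradient (f i) (θ t) with hG
    have hS0 : 0 ≤ S := Finset.sum_nonneg fun i _ =>
      mul_nonneg (hw0 t i) (sub_nonneg.2 (hinterp i _))
    have a1 : ‖G‖ ^ 2 ≤ 4 * L * S := by
      refine (norm_sq_avg (w t) (fun i => gradient (f i) (θ t)) (hw0 t) (hw1 t)).trans ?_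
      rw [hS, Finset.mul_sum]
      apply Finset.sum_le_sum
      intro i _
      have := mul_le_mul_of_nonneg_left (grad_sq_bound L hL (f i) (gradient (f i)) (hconv i)
        (hsmooth i) θstar (hinterp i) (θ t)) (hw0 t i)
      linarith
    have a2 : S ≤ ⟪G, θ t - θstar⟫_ℝ := by
      rw [hS, hG, sum_inner]
      apply Finset.sum_le_sum
      intro i _
      rw [real_inner_smul_left]
      apply mul_le_mul_of_nonneg_left _ (hw0 t i)
      have := hconv i θstar (θ t)
      rw [← neg_sub (θ t) θstar, inner_neg_right] at this
      linarith
    have a3 : ‖θ (t + 1) - θstar‖ ^ 2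
        = ‖θ t - θstar‖ ^ 2 - 2 * (η * ⟪G, θ t - θstar⟫_ℝ) + η ^ 2 * ‖G‖ ^ 2 := by
      rw [hupd t, sub_right_comm, norm_sub_sq_real, inner_smul_right, norm_smul,
        Real.norm_of_nonneg hη0.le, real_inner_comm]
      ring
    have a4 := mul_le_mul_of_nonneg_left a2 hη0.le
    have a5 := mul_le_mul_of_nonneg_left a1 (sq_nonneg η)
    have a6 : η ^ 2 * (4 * L * S) = η * S / 2 := by
      linear_combination 4 * η * S * hLη
    have a7 : 0 ≤ η * S := mul_nonneg hη0.le hS0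
    have a8 : η * S ≤ ‖θ t - θstar‖ ^ 2 - ‖θ (t + 1) - θstar‖ ^ 2 := by linarith
    have a9 := mul_le_mul_of_nonneg_left a8 (by positivity : 0 ≤ 8 * L)
    have a10 : 8 * L * (η * S) = S := by linear_combination 8 * S * hLη
    linarith
  have tel : ∑ t ∈ Finset.range T, ∑ i, w t i * (f i (θ t) - f i θstar)
      ≤ 8 * L * ‖θ 0 - θstar‖ ^ 2 := by
    refine (Finset.sum_le_sum fun t _ => step t).trans ?_
    rw [← Finset.mul_sum, Finset.sum_range_sub' (fun t => ‖θ t - θstar‖ ^ 2)]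
    apply mul_le_mul_of_nonneg_left _ (by positivity)
    linarith [sq_nonneg ‖θ T - θstar‖]
  set A := (1 / (T : ℝ)) • ∑ t ∈ Finset.range T, θ t with hA
  have jensen : ∀ i, (T : ℝ) * f i A ≤ ∑ t ∈ Finset.range T, f i (θ t) := by
    intro i
    have h := Finset.sum_le_sum fun t (_ : t ∈ Finset.range T) => hconv i (θ t) A
    rw [Finset.sum_add_distrib, ← inner_sum, Finset.sum_sub_distrib] at h
    simp only [Finset.sum_const, Finset.card_range] at h
    have z : ∑ t ∈ Finset.range T, θ t - T • A = 0 := by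
      rw [hA, ← Nat.cast_smul_eq_nsmul ℝ, smul_smul, mul_one_div_cancel hT0.ne', one_smul,
        sub_self]
    rw [z, inner_zero_right, nsmul_eq_mul] at h
    linarith
  have J : (T : ℝ) * ((1 / (M : ℝ)) * ∑ i, f i A - (1 / (M : ℝ)) * ∑ i, f i θstar)
      ≤ ∑ t ∈ Finset.range T, ∑ i, (1 / (M : ℝ)) * (f i (θ t) - f i θstar) := by
    rw [Finset.sum_comm, ← mul_sub, ← Finset.sum_sub_distrib, Finset.mul_sum, Finset.mul_sum]
    apply Finset.sum_le_sum
    intro i _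
    rw [← Finset.mul_sum, Finset.sum_sub_distrib]
    simp only [Finset.sum_const, Finset.card_range, nsmul_eq_mul]
    have := mul_le_mul_of_nonneg_left (jensen i) (by positivity : 0 ≤ 1 / (M : ℝ))
    linarith
  have split : ∑ t ∈ Finset.range T, ∑ i, ((1 / (M : ℝ)) - w t i) * (f i (θ t) - f i θstar)
      = ∑ t ∈ Finset.range T, ∑ i, (1 / (M : ℝ)) * (f i (θ t) - f i θstar)
        - ∑ t ∈ Finset.range T, ∑ i, w t i * (f i (θ t) - f i θstar) := by
    simp only [sub_mul (1 / (M : ℝ)), Finset.sum_sub_distrib]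
  rw [one_div_mul_eq_div (T : ℝ), ← add_div, le_div_iff₀ hT0, split]
  linarith
end

section
/- Under the interpolation setting, fix a step t with weights w_{i,t} ≥ 0, Σ_{i=1}^M w_{i,t} = 1, and let θ^{t+1} = θ^t − η·Σ_{i=1}^M w_{i,t} ∇f_i(θ^t) with any step size 0 < η ≤ 1/(4ML·max_i w_{i,t}). Then ‖θ^{t+1} − θ*‖² ≤ ‖θ^t − θ*‖² − η·(f(θ^t) − f(θ*)) + η·δ^t, where δ^t = Σ_{i=1}^M (1/M − w_{i,t})·(f_i(θ^t) − f_i(θ*)). -/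
open scoped InnerProductSpace BigOperators

/-- One step of reweighted full gradient descent under the interpolation regime,
with step size `0 < η ≤ 1/(4ML·max_i w_i)`: descent inequality with the
reweighting excess term `δ^t`. -/
theorem stmt_3 {d M : ℕ} (hM : 0 < M) (L : ℝ) (hL : 0 < L)
    (f : Fin M → EuclideanSpace ℝ (Fin d) → ℝ)
    (hdiff : ∀ i, Differentiable ℝ (f i))
    (hconv : ∀ i, ∀ θ₁ θ₂ : EuclideanSpace ℝ (Fin d),
      f i θ₂ + ⟪gradient (f i) θ₂, θ₁ - θ₂⟫_ℝ ≤ f i θ₁)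
    (hsmooth : ∀ i, ∀ θ θ' : EuclideanSpace ℝ (Fin d),
      ‖gradient (f i) θ - gradient (f i) θ'‖ ≤ L * ‖θ - θ'‖)
    (θstar : EuclideanSpace ℝ (Fin d))
    (hinterp : ∀ i θ, f i θstar ≤ f i θ)
    (w : Fin M → ℝ)
    (hw0 : ∀ i, 0 ≤ w i)
    (hw1 : ∑ i, w i = 1)
    (η : ℝ) (hη0 : 0 < η)
    (hη1 : η ≤ 1 / (4 * (M : ℝ) * L * (⨆ i, w i)))
    (θt θnext : EuclideanSpace ℝ (Fin d))
    (hupd : θnext = θt - η • ∑ i, w i • gradient (f i) θt) :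
    ‖θnext - θstar‖ ^ 2
      ≤ ‖θt - θstar‖ ^ 2
        - η * ((1 / (M : ℝ)) * ∑ i, f i θt - (1 / (M : ℝ)) * ∑ i, f i θstar)
        + η * ∑ i, ((1 / (M : ℝ)) - w i) * (f i θt - f i θstar) := by
  have hMr : (0 : ℝ) < M := by exact_mod_cast hM
  have hS : 1 ≤ (M : ℝ) * (⨆ i, w i) := by
    rw [← hw1]
    calc ∑ i, w i ≤ ∑ _i : Fin M, (⨆ i, w i) :=
          Finset.sum_le_sum fun i _ => le_ciSup (Set.finite_range w).bddAbove i
      _ = (M : ℝ) * (⨆ i, w i) := by simp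
  have hη : η * (4 * L) ≤ 1 := by
    have h1 : 4 * L ≤ 4 * (M : ℝ) * L * (⨆ i, w i) := by
      nlinarith [mul_le_mul_of_nonneg_left hS hL.le]
    have h2 : 0 < 4 * (M : ℝ) * L * (⨆ i, w i) := by linarith
    rw [le_div_iff₀ h2] at hη1
    exact (mul_le_mul_of_nonneg_left h1 hη0.le).trans hη1
  -- bound of the gradient by the gap
  have key : ∀ i, ‖gradient (f i) θt‖ ^ 2 ≤ 4 * L * (f i θt - f i θstar) := by
    intro i
    set g := gradient (f i) θt with hg
    set a : ℝ := 1 / (2 * L) with ha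
    have ha0 : 0 < a := by positivity
    have haL : L * a = 1 / 2 := by rw [ha]; field_simp
    set g' := gradient (f i) (θt - a • g) with hg'
    have h1 := hconv i θt (θt - a • g)
    have h2 := hinterp i (θt - a • g)
    have h3 := hsmooth i θt (θt - a • g)
    rw [← hg', sub_sub_cancel, inner_smul_right] at h1
    rw [← hg, ← hg', sub_sub_cancel, norm_smul, Real.norm_of_nonneg ha0.le, ← mul_assoc,
      haL] at h3
    have h4 : ⟪g - g', g⟫_ℝ ≤ 1 / 2 * ‖g‖ ^ 2 := by
      have := real_inner_le_norm (g - g') g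
      nlinarith [norm_nonneg g, mul_le_mul_of_nonneg_right h3 (norm_nonneg g)]
    rw [inner_sub_left, real_inner_self_eq_norm_sq] at h4
    have h5 : a * (1 / 2 * ‖g‖ ^ 2) ≤ f i θt - f i θstar := by
      have : a * (1 / 2 * ‖g‖ ^ 2) ≤ a * ⟪g', g⟫_ℝ :=
        mul_le_mul_of_nonneg_left (by linarith) ha0.le
      linarith
    have h6 := mul_le_mul_of_nonneg_left h5 (by positivity : 0 ≤ 4 * L)
    have h7 : 4 * L * (a * (1 / 2 * ‖g‖ ^ 2)) = ‖g‖ ^ 2 := by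
      linear_combination 2 * ‖g‖ ^ 2 * haL
    linarith
  set G := ∑ i, w i • gradient (f i) θt with hG
  have hJ : ‖G‖ ^ 2 ≤ ∑ i, w i * ‖gradient (f i) θt‖ ^ 2 := by
    have e1 : ‖G‖ ^ 2 = ∑ i, w i * ⟪gradient (f i) θt, G⟫_ℝ := by
      rw [← real_inner_self_eq_norm_sq]
      nth_rewrite 1 [hG]
      rw [sum_inner]
      simp only [real_inner_smul_left]
    have e2 : ∑ i, w i * ⟪gradient (f i) θt, G⟫_ℝ
        ≤ ∑ i, (1 / 2 * (w i * ‖gradient (f i) θt‖ ^ 2) + w i * (1 / 2 * ‖G‖ ^ 2)) := by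
      refine Finset.sum_le_sum fun i _ => ?_
      have := real_inner_le_norm (gradient (f i) θt) G
      have h : ⟪gradient (f i) θt, G⟫_ℝ
          ≤ 1 / 2 * ‖gradient (f i) θt‖ ^ 2 + 1 / 2 * ‖G‖ ^ 2 := by
        nlinarith [sq_nonneg (‖gradient (f i) θt‖ - ‖G‖)]
      linarith [mul_le_mul_of_nonneg_left h (hw0 i)]
    rw [Finset.sum_add_distrib, ← Finset.mul_sum, ← Finset.sum_mul, hw1] at e2
    linarith
  have hK : ∑ i, w i * ‖gradient (f i) θt‖ ^ 2
      ≤ 4 * L * ∑ i, w i * (f i θt - f i θstar) := by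
    rw [Finset.mul_sum]
    refine Finset.sum_le_sum fun i _ => ?_
    linarith [mul_le_mul_of_nonneg_left (key i) (hw0 i)]
  have hI : ∑ i, w i * (f i θt - f i θstar) ≤ ⟪θt - θstar, G⟫_ℝ := by
    rw [hG, inner_sum]
    refine Finset.sum_le_sum fun i _ => ?_
    rw [inner_smul_right]
    refine mul_le_mul_of_nonneg_left ?_ (hw0 i)
    have h := hconv i θstar θt
    rw [← neg_sub θt θstar, inner_neg_right, real_inner_comm] at h
    linarith
  have hD : 0 ≤ ∑ i, w i * (f i θt - f i θstar) :=
    Finset.sum_nonneg fun i _ => mul_nonneg (hw0 i) (sub_nonneg.2 (hinterp i θt))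
  have hR : ∑ i, ((1 / (M : ℝ)) - w i) * (f i θt - f i θstar)
      = ((1 / (M : ℝ)) * ∑ i, f i θt - (1 / (M : ℝ)) * ∑ i, f i θstar)
        - ∑ i, w i * (f i θt - f i θstar) := by
    simp only [sub_mul, Finset.sum_sub_distrib, ← Finset.mul_sum, mul_sub]
    ring
  rw [hR]
  set D := ∑ i, w i * (f i θt - f i θstar) with hDdef
  have hN : ‖θnext - θstar‖ ^ 2
      = ‖θt - θstar‖ ^ 2 - 2 * η * ⟪θt - θstar, G⟫_ℝ + η ^ 2 * ‖G‖ ^ 2 := by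
    rw [hupd, sub_right_comm, norm_sub_sq_real, inner_smul_right, norm_smul,
      Real.norm_of_nonneg hη0.le]
    ring
  rw [hN]
  have q1 : η ^ 2 * ‖G‖ ^ 2 ≤ η * D := by
    have := mul_le_mul_of_nonneg_left (hJ.trans hK) (sq_nonneg η)
    have := mul_le_mul_of_nonneg_right hη (mul_nonneg hη0.le hD)
    nlinarith
  have q2 := mul_le_mul_of_nonneg_left hI hη0.le
  linarith
end

section
/- Let r > 0 and Δ_1, …, Δ_M ∈ ℝ. Consider the feasible set K = {w ∈ ℝ^M : 0 ≤ w_i ≤ 2/M for all i, Σ_{i=1}^M w_i = 1} and the objective G(w) = Σ_{i=1}^M (1/M − w_i)·Δ_i + r·Σ_{i=1}^M w_i·log(M·w_i) (with the convention 0·log 0 = 0). Then there exists a constant C > 0 such that the vector w* defined by w*_i = min{C·exp(Δ_i/r), 2/M} belongs to K (in particular Σ_i w*_i = 1) and minimizes G over K. -/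
open scoped BigOperators

lemma aux_tangent (v w m : ℝ) (hm : 0 < m) (hv : 0 < v) (hw : 0 ≤ w) :
    v * Real.log (m * v) + (w - v) * (Real.log (m * v) + 1) ≤ w * Real.log (m * w) := by
  rcases hw.eq_or_lt with h | h
  · subst h
    simp
    linarith
  · have h1 := Real.log_le_sub_one_of_pos (div_pos hv h)
    rw [Real.log_div hv.ne' h.ne'] at h1
    rw [Real.log_mul hm.ne' hv.ne', Real.log_mul hm.ne' h.ne']
    have h2 := mul_le_mul_of_nonneg_left h1 h.le
    have h3 : w * (v / w - 1) = v - w := by field_simp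
    rw [h3] at h2
    linarith

lemma aux_term (r C m d w : ℝ) (hr : 0 < r) (hC : 0 < C) (hm : 0 < m) (hw : 0 ≤ w)
    (hw2 : w ≤ 2 / m) :
    (1 / m - min (C * Real.exp (d / r)) (2 / m)) * d
      + r * (min (C * Real.exp (d / r)) (2 / m)
        * Real.log (m * min (C * Real.exp (d / r)) (2 / m)))
      + (w - min (C * Real.exp (d / r)) (2 / m)) * (r * Real.log (m * C) + r)
      ≤ (1 / m - w) * d + r * (w * Real.log (m * w)) := by
  have he : 0 < C * Real.exp (d / r) := mul_pos hC (Real.exp_pos _)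
  have hlog : r * Real.log (m * (C * Real.exp (d / r))) = r * Real.log (m * C) + d := by
    rw [← mul_assoc, Real.log_mul (mul_pos hm hC).ne' (Real.exp_pos _).ne', Real.log_exp]
    field_simp
  have hv : 0 < min (C * Real.exp (d / r)) (2 / m) := lt_min he (by positivity)
  have key : 0 ≤ (w - min (C * Real.exp (d / r)) (2 / m)) *
      (r * Real.log (m * min (C * Real.exp (d / r)) (2 / m)) - (r * Real.log (m * C) + d)) := by
    rcases le_total (C * Real.exp (d / r)) (2 / m) with h | h
    · rw [min_eq_left h, hlog]; simp
    · rw [min_eq_right h, ← hlog]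
      apply mul_nonneg_of_nonpos_of_nonpos
      · linarith
      · have : Real.log (m * (2 / m)) ≤ Real.log (m * (C * Real.exp (d / r))) := by
          apply Real.log_le_log (by positivity)
          gcongr
        have := mul_le_mul_of_nonneg_left this hr.le
        linarith
  have ht := mul_le_mul_of_nonneg_left (aux_tangent _ w m hm hv hw) hr.le
  generalize min (C * Real.exp (d / r)) (2 / m) = v at *
  generalize Real.log (m * v) = a at *
  generalize Real.log (m * w) = b at *
  nlinarith

/-- The capped-softmax weights minimize the KL-regularized reweighting excess term
over the capped probability simplex. -/
theorem stmt_4 {M : ℕ} (hM : 0 < M) (r : ℝ) (hr : 0 < r) (Δ : Fin M → ℝ)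
    (K : Set (Fin M → ℝ))
    (hK : K = {w : Fin M → ℝ |
      (∀ i, 0 ≤ w i ∧ w i ≤ 2 / (M : ℝ)) ∧ ∑ i, w i = 1})
    (G : (Fin M → ℝ) → ℝ)
    (hG : G = fun w : Fin M → ℝ =>
      (∑ i, ((1 / (M : ℝ)) - w i) * Δ i)
        + r * ∑ i, w i * Real.log ((M : ℝ) * w i)) :
    ∃ C : ℝ, 0 < C ∧
      (fun i => min (C * Real.exp (Δ i / r)) (2 / (M : ℝ))) ∈ K ∧
      ∀ w ∈ K, G (fun i => min (C * Real.exp (Δ i / r)) (2 / (M : ℝ))) ≤ G w := by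
  have hm : (0 : ℝ) < M := by exact_mod_cast hM
  set S : ℝ → ℝ := fun C => ∑ i, min (C * Real.exp (Δ i / r)) (2 / (M : ℝ)) with hS
  have hcont : Continuous S := by
    simp only [hS]; fun_prop
  have hS0 : S 0 = 0 := by
    simp only [hS, zero_mul]
    exact Finset.sum_eq_zero fun i _ => min_eq_left (by positivity)
  set C0 : ℝ := ∑ i, 2 / (M : ℝ) * Real.exp (-(Δ i / r)) with hC0
  have hC0n : 0 ≤ C0 := Finset.sum_nonneg fun i _ => by positivity
  have hS1 : S C0 = 2 := by
    have : ∀ i, min (C0 * Real.exp (Δ i / r)) (2 / (M : ℝ)) = 2 / (M : ℝ) := by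
      intro i
      apply min_eq_right
      have h1 : 2 / (M : ℝ) * Real.exp (-(Δ i / r)) ≤ C0 :=
        Finset.single_le_sum (f := fun i => 2 / (M : ℝ) * Real.exp (-(Δ i / r)))
          (fun i _ => by positivity) (Finset.mem_univ i)
      have h2 := mul_le_mul_of_nonneg_right h1 (Real.exp_pos (Δ i / r)).le
      rwa [mul_assoc, ← Real.exp_add, neg_add_cancel, Real.exp_zero, mul_one] at h2
    simp only [hS, this]
    simp
    field_simp
  obtain ⟨C, hCm, hC1⟩ : (1 : ℝ) ∈ S '' Set.Icc 0 C0 :=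
    intermediate_value_Icc hC0n hcont.continuousOn (by rw [hS0, hS1]; constructor <;> norm_num)
  have hC : 0 < C := by
    rcases hCm.1.eq_or_lt with h | h
    · rw [← h, hS0] at hC1; norm_num at hC1
    · exact h
  refine ⟨C, hC, ?_, ?_⟩
  · rw [hK]
    exact ⟨fun i => ⟨le_min (by positivity) (by positivity), min_le_right _ _⟩, hC1⟩
  · intro w hw
    rw [hK] at hw
    obtain ⟨hw1, hw2⟩ := hw
    have := Finset.sum_le_sum fun i (_ : i ∈ Finset.univ) =>
      aux_term r C M (Δ i) (w i) hr hC hm (hw1 i).1 (hw1 i).2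
    have hC1' : ∑ i, min (C * Real.exp (Δ i / r)) (2 / (M : ℝ)) = 1 := hC1
    rw [Finset.sum_add_distrib, Finset.sum_add_distrib, Finset.sum_add_distrib,
      ← Finset.sum_mul, Finset.sum_sub_distrib, hw2, hC1', ← Finset.mul_sum,
      ← Finset.mul_sum] at this
    rw [hG]
    simpa using this
end

section
/- Under the interpolation setting, let B ⊆ {1,…,M} be a batch of size b, let w_i ≥ 0 for i ∈ B with Σ_{i∈B} w_i = 1, let η > 0, and set θ' = θ − η·Σ_{i∈B} w_i ∇f_i(θ). Then ‖θ' − θ*‖² ≤ ‖θ − θ*‖² + Σ_{i∈B} w_i·(4Lη²·b·w_i − 2η)·(f_i(θ) − f_i(θ*)). -/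
open scoped InnerProductSpace BigOperators

/-- One step of reweighted minibatch gradient descent under the interpolation
regime: basic descent inequality (any step size `η > 0`). -/
theorem stmt_6 {d M : ℕ} (L : ℝ) (hL : 0 < L)
    (f : Fin M → EuclideanSpace ℝ (Fin d) → ℝ)
    (hdiff : ∀ i, Differentiable ℝ (f i))
    (hconv : ∀ i, ∀ θ₁ θ₂ : EuclideanSpace ℝ (Fin d),
      f i θ₂ + ⟪gradient (f i) θ₂, θ₁ - θ₂⟫_ℝ ≤ f i θ₁)
    (hsmooth : ∀ i, ∀ θ θ' : EuclideanSpace ℝ (Fin d),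
      ‖gradient (f i) θ - gradient (f i) θ'‖ ≤ L * ‖θ - θ'‖)
    (θstar : EuclideanSpace ℝ (Fin d))
    (hinterp : ∀ i θ, f i θstar ≤ f i θ)
    (B : Finset (Fin M)) (b : ℕ) (hb : B.card = b)
    (w : Fin M → ℝ)
    (hw0 : ∀ i ∈ B, 0 ≤ w i)
    (hw1 : ∑ i ∈ B, w i = 1)
    (η : ℝ) (hη0 : 0 < η)
    (θ θ' : EuclideanSpace ℝ (Fin d))
    (hupd : θ' = θ - η • ∑ i ∈ B, w i • gradient (f i) θ) :
    ‖θ' - θstar‖ ^ 2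
      ≤ ‖θ - θstar‖ ^ 2
        + ∑ i ∈ B, w i * (4 * L * η ^ 2 * (b : ℝ) * w i - 2 * η)
            * (f i θ - f i θstar) := by
  have key : ∀ i, ‖gradient (f i) θ‖ ^ 2 ≤ 4 * L * (f i θ - f i θstar) := by
    intro i
    set g := gradient (f i) θ with hg
    set t : ℝ := 1 / (2 * L) with ht
    have htpos : 0 < t := by positivity
    have htL : L * t = 1 / 2 := by rw [ht]; field_simp
    have h1 := hconv i θ (θ - t • g)
    have h2 := hsmooth i θ (θ - t • g)
    have h3 := hinterp i (θ - t • g)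
    rw [sub_sub_cancel] at h1 h2
    rw [← hg] at h2
    set k := gradient (f i) (θ - t • g) with hk
    rw [real_inner_smul_right] at h1
    rw [norm_smul, Real.norm_of_nonneg htpos.le, ← mul_assoc, htL] at h2
    have h4 : ⟪g - k, g⟫_ℝ ≤ ‖g - k‖ * ‖g‖ := real_inner_le_norm _ _
    rw [inner_sub_left, real_inner_self_eq_norm_sq] at h4
    have h5 : ‖g‖ ^ 2 / 2 ≤ ⟪k, g⟫_ℝ := by
      nlinarith [norm_nonneg g]
    have h6 : t * (‖g‖ ^ 2 / 2) ≤ f i θ - f i θstar := by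
      have := mul_le_mul_of_nonneg_left h5 htpos.le
      linarith
    have h7 := mul_le_mul_of_nonneg_left h6 (by positivity : 0 ≤ 4 * L)
    have h8 : 4 * L * (t * (‖g‖ ^ 2 / 2)) = ‖g‖ ^ 2 := by
      linear_combination 2 * ‖g‖ ^ 2 * htL
    linarith
  set G := ∑ i ∈ B, w i • gradient (f i) θ with hG
  have hnorm : ‖G‖ ^ 2 ≤ (b : ℝ) * ∑ i ∈ B, w i ^ 2 * (4 * L * (f i θ - f i θstar)) := by
    have h1 : ‖G‖ ^ 2 ≤ (∑ i ∈ B, ‖w i • gradient (f i) θ‖) ^ 2 := by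
      gcongr
      exact norm_sum_le _ _
    have h2 := sq_sum_le_card_mul_sum_sq (s := B) (f := fun i => ‖w i • gradient (f i) θ‖)
    rw [hb] at h2
    refine (h1.trans h2).trans ?_
    gcongr with i hi
    rw [norm_smul, mul_pow, Real.norm_eq_abs, sq_abs]
    gcongr
    exact key i
  have hinner : ∑ i ∈ B, w i * (f i θ - f i θstar) ≤ ⟪θ - θstar, G⟫_ℝ := by
    rw [hG, inner_sum]
    refine Finset.sum_le_sum fun i hi => ?_
    rw [real_inner_smul_right]
    refine mul_le_mul_of_nonneg_left ?_ (hw0 i hi)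
    have h := hconv i θstar θ
    rw [← neg_sub θ θstar, inner_neg_right, real_inner_comm] at h
    linarith
  have hexp : ‖θ' - θstar‖ ^ 2
      = ‖θ - θstar‖ ^ 2 - 2 * η * ⟪θ - θstar, G⟫_ℝ + η ^ 2 * ‖G‖ ^ 2 := by
    rw [hupd, sub_right_comm, norm_sub_sq_real, real_inner_smul_right, norm_smul, mul_pow,
      Real.norm_eq_abs, sq_abs]
    ring
  have hsum : ∑ i ∈ B, w i * (4 * L * η ^ 2 * (b : ℝ) * w i - 2 * η) * (f i θ - f i θstar)
      = η ^ 2 * ((b : ℝ) * ∑ i ∈ B, w i ^ 2 * (4 * L * (f i θ - f i θstar)))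
        - 2 * η * ∑ i ∈ B, w i * (f i θ - f i θstar) := by
    simp only [Finset.mul_sum]
    rw [← Finset.sum_sub_distrib]
    refine Finset.sum_congr rfl fun i _ => ?_
    ring
  rw [hexp, hsum]
  have a1 := mul_le_mul_of_nonneg_left hnorm (sq_nonneg η)
  have a2 := mul_le_mul_of_nonneg_left hinner (by positivity : 0 ≤ 2 * η)
  linarith
end

section
/- Under the interpolation setting, let B ⊆ {1,…,M} be a batch of size b, let w_i ≥ 0 for i ∈ B with Σ_{i∈B} w_i = 1, let 0 < η ≤ 1/(4bL·max_{i∈B} w_i), and set θ' = θ − η·Σ_{i∈B} w_i ∇f_i(θ). Then ‖θ' − θ*‖² ≤ ‖θ − θ*‖² − (η/b)·Σ_{i∈B}(f_i(θ) − f_i(θ*)) + η·Σ_{i∈B}(1/b − w_i)·(f_i(θ) − f_i(θ*)). -/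
open scoped InnerProductSpace BigOperators

/-- One step of reweighted minibatch gradient descent under the interpolation
regime, with step size `0 < η ≤ 1/(4bL·max_{i∈B} w_i)`: descent inequality with
the reweighting excess term. -/
theorem stmt_7 {d M : ℕ} (L : ℝ) (hL : 0 < L)
    (f : Fin M → EuclideanSpace ℝ (Fin d) → ℝ)
    (hdiff : ∀ i, Differentiable ℝ (f i))
    (hconv : ∀ i, ∀ θ₁ θ₂ : EuclideanSpace ℝ (Fin d),
      f i θ₂ + ⟪gradient (f i) θ₂, θ₁ - θ₂⟫_ℝ ≤ f i θ₁)
    (hsmooth : ∀ i, ∀ θ θ' : EuclideanSpace ℝ (Fin d),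
      ‖gradient (f i) θ - gradient (f i) θ'‖ ≤ L * ‖θ - θ'‖)
    (θstar : EuclideanSpace ℝ (Fin d))
    (hinterp : ∀ i θ, f i θstar ≤ f i θ)
    (B : Finset (Fin M)) (hB : B.Nonempty) (b : ℕ) (hb : B.card = b)
    (w : Fin M → ℝ)
    (hw0 : ∀ i ∈ B, 0 ≤ w i)
    (hw1 : ∑ i ∈ B, w i = 1)
    (η : ℝ) (hη0 : 0 < η)
    (hη1 : η ≤ 1 / (4 * (b : ℝ) * L * B.sup' hB w))
    (θ θ' : EuclideanSpace ℝ (Fin d))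
    (hupd : θ' = θ - η • ∑ i ∈ B, w i • gradient (f i) θ) :
    ‖θ' - θstar‖ ^ 2
      ≤ ‖θ - θstar‖ ^ 2
        - (η / (b : ℝ)) * ∑ i ∈ B, (f i θ - f i θstar)
        + η * ∑ i ∈ B, ((1 / (b : ℝ)) - w i) * (f i θ - f i θstar) := by
  have hbpos : (0 : ℝ) < b := by
    rw [← hb]; exact_mod_cast hB.card_pos
  have hgrad : ∀ i, ‖gradient (f i) θ‖ ^ 2 ≤ 4 * L * (f i θ - f i θstar) := by
    intro i
    set g := gradient (f i) θ with hg
    have h1 := hconv i θ (θ - (1 / (2 * L)) • g)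
    have h2 := hinterp i (θ - (1 / (2 * L)) • g)
    have h3 := hsmooth i θ (θ - (1 / (2 * L)) • g)
    set h := gradient (f i) (θ - (1 / (2 * L)) • g) with hh
    rw [← hg] at h3
    rw [sub_sub_cancel] at h1 h3
    have hn : ‖(1 / (2 * L)) • g‖ = (1 / (2 * L)) * ‖g‖ := by
      rw [norm_smul, Real.norm_of_nonneg (by positivity)]
    rw [hn] at h3
    have h3' : ‖g - h‖ ≤ ‖g‖ / 2 := by
      refine h3.trans (le_of_eq ?_)
      field_simp
    rw [inner_smul_right] at h1
    have h4 : ⟪g - h, g⟫_ℝ ≤ ‖g - h‖ * ‖g‖ := real_inner_le_norm _ _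
    rw [inner_sub_left, real_inner_self_eq_norm_sq] at h4
    have h5 : ‖g‖ ^ 2 / 2 ≤ ⟪h, g⟫_ℝ := by
      nlinarith [norm_nonneg g]
    have h6 : 1 / (2 * L) * ⟪h, g⟫_ℝ ≤ f i θ - f i θstar := by linarith
    have h7 : ⟪h, g⟫_ℝ ≤ 2 * L * (f i θ - f i θstar) := by
      rw [one_div, inv_mul_le_iff₀ (by positivity)] at h6
      exact h6
    linarith
  have hmax : 1 ≤ (b : ℝ) * B.sup' hB w := by
    rw [← hw1, ← hb, ← nsmul_eq_mul]
    exact Finset.sum_le_card_nsmul _ _ _ (fun i hi => Finset.le_sup' w hi)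
  have hη : η * (4 * L) ≤ 1 := by
    have hp : 0 < 4 * (b : ℝ) * L * B.sup' hB w := by nlinarith
    rw [le_div_iff₀ hp] at hη1
    have : η * (4 * L) * 1 ≤ η * (4 * L) * ((b : ℝ) * B.sup' hB w) :=
      mul_le_mul_of_nonneg_left hmax (by positivity)
    nlinarith
  set S := ∑ i ∈ B, w i * (f i θ - f i θstar) with hS
  set G := ∑ i ∈ B, w i • gradient (f i) θ with hG
  have hGn : ‖G‖ ^ 2 ≤ 4 * L * S := by
    have a1 : ‖G‖ ≤ ∑ i ∈ B, w i * ‖gradient (f i) θ‖ := by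
      refine (norm_sum_le _ _).trans (Finset.sum_le_sum fun i hi => ?_)
      rw [norm_smul, Real.norm_of_nonneg (hw0 i hi)]
    have a2 := Real.pow_arith_mean_le_arith_mean_pow B w (fun i => ‖gradient (f i) θ‖)
      hw0 hw1 (fun i _ => norm_nonneg _) 2
    refine (pow_le_pow_left₀ (norm_nonneg _) a1 2).trans (a2.trans ?_)
    rw [hS, Finset.mul_sum]
    refine Finset.sum_le_sum fun i hi => ?_
    have := mul_le_mul_of_nonneg_left (hgrad i) (hw0 i hi)
    linarith
  have hin : S ≤ ⟪θ - θstar, G⟫_ℝ := by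
    rw [hS, hG, inner_sum]
    refine Finset.sum_le_sum fun i hi => ?_
    rw [inner_smul_right]
    refine mul_le_mul_of_nonneg_left ?_ (hw0 i hi)
    have := hconv i θstar θ
    rw [← neg_sub θ θstar, inner_neg_right, real_inner_comm] at this
    linarith
  have hS0 : 0 ≤ S := Finset.sum_nonneg fun i hi =>
    mul_nonneg (hw0 i hi) (sub_nonneg.2 (hinterp i θ))
  have hR : ∑ i ∈ B, ((1 / (b : ℝ)) - w i) * (f i θ - f i θstar)
      = (1 / (b : ℝ)) * ∑ i ∈ B, (f i θ - f i θstar) - S := by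
    rw [hS, Finset.mul_sum, ← Finset.sum_sub_distrib]
    exact Finset.sum_congr rfl fun i _ => by ring
  have hE : ‖θ' - θstar‖ ^ 2
      = ‖θ - θstar‖ ^ 2 - 2 * η * ⟪θ - θstar, G⟫_ℝ + η ^ 2 * ‖G‖ ^ 2 := by
    rw [hupd, sub_right_comm, norm_sub_sq_real, inner_smul_right, norm_smul,
      Real.norm_of_nonneg hη0.le]
    ring
  rw [hR, hE]
  have e1 : η ^ 2 * ‖G‖ ^ 2 ≤ η * S := by
    have c1 := mul_le_mul_of_nonneg_left hGn (sq_nonneg η)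
    have c2 := mul_le_mul_of_nonneg_right hη (mul_nonneg hη0.le hS0)
    linarith
  have e2 := mul_le_mul_of_nonneg_left hin hη0.le
  have e3 : η / (b : ℝ) * ∑ i ∈ B, (f i θ - f i θstar)
      = η * (1 / (b : ℝ) * ∑ i ∈ B, (f i θ - f i θstar)) := by ring
  rw [e3]
  linarith
end

section
/- Under the interpolation setting, let the reweighted gradient descent iterates be θ^{t+1} = θ^t − η·Σ_{i=1}^M w_{i,t} ∇f_i(θ^t) for t = 0,…,T−1, with step size η = 1/(8L√T), where at each step t the weights satisfy w_{i,t} ≥ 0, Σ_{i=1}^M w_{i,t} = 1, and max_i w_{i,t} ≤ 2/M. Then the averaged iterate θ̄^T = (1/T)·Σ_{t=0}^{T−1} θ^t satisfies f(θ̄^T) − f(θ*) ≤ 8L‖θ^0 − θ*‖²/√T + (1/T)·Σ_{t=0}^{T−1} δ_t, where δ_t = Σ_{i=1}^M (1/M − w_{i,t})·(f_i(θ^t) − f_i(θ*)). -/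
open scoped InnerProductSpace BigOperators

/-- Self-bounding of the gradient, obtained from convexity and Lipschitz gradients only. -/
theorem aux_grad_sq {E : Type*} [NormedAddCommGroup E] [InnerProductSpace ℝ E]
    (F : E → ℝ) (G : E → E) (L : ℝ) (hL : 0 < L)
    (hconv : ∀ a b : E, F b + ⟪G b, a - b⟫_ℝ ≤ F a)
    (hs : ∀ a b : E, ‖G a - G b‖ ≤ L * ‖a - b‖) (z : E) (hz : ∀ a, F z ≤ F a) (x : E) :
    ‖G x‖ ^ 2 ≤ 4 * L * (F x - F z) := by
  have h1 := hconv x (x - (1 / (2 * L)) • G x)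
  have h2 := hz (x - (1 / (2 * L)) • G x)
  have h3 := hs x (x - (1 / (2 * L)) • G x)
  rw [sub_sub_cancel] at h1 h3
  set y := x - (1 / (2 * L)) • G x
  have hn : ‖(1 / (2 * L)) • G x‖ = (1 / (2 * L)) * ‖G x‖ := by
    rw [norm_smul, Real.norm_of_nonneg (by positivity)]
  have h4 : ‖G x - G y‖ ≤ ‖G x‖ / 2 := by
    rw [hn] at h3
    refine h3.trans (le_of_eq ?_)
    field_simp
  rw [real_inner_smul_right] at h1
  have h5 : ⟪G x - G y, G x⟫_ℝ ≤ ‖G x‖ / 2 * ‖G x‖ :=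
    (real_inner_le_norm _ _).trans (by gcongr)
  rw [inner_sub_left, real_inner_self_eq_norm_sq] at h5
  have h6 : ‖G x‖ ^ 2 / 2 ≤ ⟪G y, G x⟫_ℝ := by nlinarith
  have h7 : 1 / (2 * L) * (‖G x‖ ^ 2 / 2) ≤ F x - F z := by
    have : 1 / (2 * L) * (‖G x‖ ^ 2 / 2) ≤ 1 / (2 * L) * ⟪G y, G x⟫_ℝ := by gcongr
    linarith
  have h8 : 4 * L * (1 / (2 * L) * (‖G x‖ ^ 2 / 2)) = ‖G x‖ ^ 2 := by
    field_simp
    norm_num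
  rw [← h8]
  gcongr

/-- Jensen's inequality for the uniform average from the first-order condition. -/
theorem aux_jensen {E : Type*} [NormedAddCommGroup E] [InnerProductSpace ℝ E]
    (F : E → ℝ) (G : E → E)
    (hconv : ∀ a b : E, F b + ⟪G b, a - b⟫_ℝ ≤ F a) (T : ℕ) (hT : 1 ≤ T) (θ : ℕ → E) :
    (T : ℝ) * F ((1 / (T : ℝ)) • ∑ t ∈ Finset.range T, θ t) ≤ ∑ t ∈ Finset.range T, F (θ t) := by
  set b := (1 / (T : ℝ)) • ∑ t ∈ Finset.range T, θ t with hb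
  have hT' : (T : ℝ) ≠ 0 := by positivity
  have h := Finset.sum_le_sum (fun t (_ : t ∈ Finset.range T) => hconv (θ t) b)
  rw [Finset.sum_add_distrib, ← inner_sum, Finset.sum_sub_distrib] at h
  have h0 : ∑ t ∈ Finset.range T, θ t - ∑ t ∈ Finset.range T, b = 0 := by
    rw [Finset.sum_const, Finset.card_range, ← Nat.cast_smul_eq_nsmul ℝ, hb, smul_smul,
      mul_one_div_cancel hT', one_smul, sub_self]
  rw [h0, inner_zero_right] at h
  simpa using h

/-- One step of reweighted gradient descent. -/
theorem aux_step {E : Type*} [NormedAddCommGroup E] [InnerProductSpace ℝ E] {M : ℕ}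
    (F : Fin M → E → ℝ) (G : Fin M → E → E) (L : ℝ)
    (hconv : ∀ i, ∀ a b : E, F i b + ⟪G i b, a - b⟫_ℝ ≤ F i a) (z x : E)
    (hg : ∀ i, ‖G i x‖ ^ 2 ≤ 4 * L * (F i x - F i z))
    (w : Fin M → ℝ) (hw0 : ∀ i, 0 ≤ w i) (hw1 : ∑ i, w i = 1) (η : ℝ) (hη : 0 ≤ η) :
    ‖x - η • ∑ i, w i • G i x - z‖ ^ 2 ≤ ‖x - z‖ ^ 2
      - 2 * η * (1 - 2 * (η * L)) * ∑ i, w i * (F i x - F i z) := by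
  set g := ∑ i, w i • G i x with hgdef
  set H := ∑ i, w i * (F i x - F i z) with hH
  have h1 : H ≤ ⟪x - z, g⟫_ℝ := by
    rw [hgdef, inner_sum]
    refine Finset.sum_le_sum fun i _ => ?_
    rw [real_inner_smul_right, real_inner_comm]
    refine mul_le_mul_of_nonneg_left ?_ (hw0 i)
    have := hconv i z x
    rw [← neg_sub x z, inner_neg_right] at this
    linarith
  have h2 : ‖g‖ ^ 2 ≤ 4 * L * H := by
    have ha : ‖g‖ ≤ ∑ i, w i * ‖G i x‖ := by
      refine (norm_sum_le _ _).trans (le_of_eq (Finset.sum_congr rfl fun i _ => ?_))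
      rw [norm_smul, Real.norm_of_nonneg (hw0 i)]
    have hb := Real.pow_arith_mean_le_arith_mean_pow Finset.univ w (fun i => ‖G i x‖)
      (fun i _ => hw0 i) hw1 (fun i _ => norm_nonneg _) 2
    calc ‖g‖ ^ 2 ≤ (∑ i, w i * ‖G i x‖) ^ 2 := by gcongr
      _ ≤ ∑ i, w i * ‖G i x‖ ^ 2 := hb
      _ ≤ ∑ i, w i * (4 * L * (F i x - F i z)) :=
        Finset.sum_le_sum fun i _ => mul_le_mul_of_nonneg_left (hg i) (hw0 i)
      _ = 4 * L * H := by
        rw [hH, Finset.mul_sum]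
        exact Finset.sum_congr rfl fun i _ => by ring
  have h3 : ‖x - η • g - z‖ ^ 2 = ‖x - z‖ ^ 2 - 2 * (η * ⟪x - z, g⟫_ℝ) + η ^ 2 * ‖g‖ ^ 2 := by
    rw [sub_right_comm, norm_sub_sq_real, real_inner_smul_right, norm_smul, mul_pow,
      Real.norm_eq_abs, sq_abs]
  rw [h3]
  have h4 := mul_le_mul_of_nonneg_left h1 hη
  have h5 := mul_le_mul_of_nonneg_left h2 (sq_nonneg η)
  nlinarith

/-- Reweighted full-batch gradient descent with step size `η = 1/(8L√T)` under
the interpolation regime: `O(1/√T)` convergence bound for the averaged iterate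
with the reweighting excess terms `δ_t`. -/
theorem stmt_8 {d M : ℕ} (hM : 0 < M) (L : ℝ) (hL : 0 < L)
    (f : Fin M → EuclideanSpace ℝ (Fin d) → ℝ)
    (hdiff : ∀ i, Differentiable ℝ (f i))
    (hconv : ∀ i, ∀ θ₁ θ₂ : EuclideanSpace ℝ (Fin d),
      f i θ₂ + ⟪gradient (f i) θ₂, θ₁ - θ₂⟫_ℝ ≤ f i θ₁)
    (hsmooth : ∀ i, ∀ θ θ' : EuclideanSpace ℝ (Fin d),
      ‖gradient (f i) θ - gradient (f i) θ'‖ ≤ L * ‖θ - θ'‖)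
    (θstar : EuclideanSpace ℝ (Fin d))
    (hinterp : ∀ i θ, f i θstar ≤ f i θ)
    (w : ℕ → Fin M → ℝ)
    (hw0 : ∀ t i, 0 ≤ w t i)
    (hw1 : ∀ t, ∑ i, w t i = 1)
    (hwmax : ∀ t i, w t i ≤ 2 / (M : ℝ))
    (T : ℕ) (hT : 1 ≤ T)
    (η : ℝ) (hη : η = 1 / (8 * L * Real.sqrt T))
    (θ : ℕ → EuclideanSpace ℝ (Fin d))
    (hupd : ∀ t < T, θ (t + 1) = θ t - η • ∑ i, w t i • gradient (f i) (θ t)) :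
    (1 / (M : ℝ)) * ∑ i, f i ((1 / (T : ℝ)) • ∑ t ∈ Finset.range T, θ t)
        - (1 / (M : ℝ)) * ∑ i, f i θstar
      ≤ 8 * L * ‖θ 0 - θstar‖ ^ 2 / Real.sqrt T
        + (1 / (T : ℝ)) * ∑ t ∈ Finset.range T,
            ∑ i, ((1 / (M : ℝ)) - w t i) * (f i (θ t) - f i θstar) := by
  have hT' : (0 : ℝ) < T := by positivity
  have hM' : (0 : ℝ) < M := by positivity
  have hs1 : 1 ≤ Real.sqrt T := Real.one_le_sqrt.mpr (by exact_mod_cast hT)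
  have hss : Real.sqrt T * Real.sqrt T = T := Real.mul_self_sqrt hT'.le
  set s := Real.sqrt T with hs
  have hs0 : 0 < s := by linarith
  have hη0 : 0 < η := by rw [hη]; positivity
  have hηs : η * L * s = 1 / 8 := by rw [hη]; field_simp
  have hηL : η * L ≤ 1 / 8 := by
    have : 0 < η * L := by positivity
    nlinarith
  have hg := fun i x => aux_grad_sq (f i) (gradient (f i)) L hL (hconv i) (hsmooth i) θstar
    (hinterp i) x
  let H : ℕ → ℝ := fun t => ∑ i, w t i * (f i (θ t) - f i θstar)
  have hH0 : ∀ t, 0 ≤ H t := fun t => Finset.sum_nonneg fun i _ =>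
    mul_nonneg (hw0 t i) (sub_nonneg.mpr (hinterp i _))
  have hstep : ∀ t < T, ‖θ (t + 1) - θstar‖ ^ 2 ≤ ‖θ t - θstar‖ ^ 2 - η * H t := by
    intro t ht
    have h := aux_step f (fun i => gradient (f i)) L hconv θstar (θ t) (fun i => hg i (θ t))
      (w t) (hw0 t) (hw1 t) η hη0.le
    rw [← hupd t ht] at h
    have h' : 0 ≤ η * H t := mul_nonneg hη0.le (hH0 t)
    change _ ≤ _ - 2 * η * (1 - 2 * (η * L)) * H t at h
    nlinarith
  have hsum : ∀ n ≤ T, η * ∑ t ∈ Finset.range n, H t ≤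
      ‖θ 0 - θstar‖ ^ 2 - ‖θ n - θstar‖ ^ 2 := by
    intro n
    induction n with
    | zero => intro _; simp
    | succ n ih =>
      intro hn
      have h1 := ih (by omega)
      have h2 := hstep n (by omega)
      rw [Finset.sum_range_succ, mul_add]
      linarith
  have hfin : ∑ t ∈ Finset.range T, H t ≤ 8 * L * s * ‖θ 0 - θstar‖ ^ 2 := by
    have h1 := hsum T le_rfl
    have h2 : η * ∑ t ∈ Finset.range T, H t ≤ ‖θ 0 - θstar‖ ^ 2 := by
      have := sq_nonneg ‖θ T - θstar‖
      linarith
    have h3 : η * (8 * L * s * ‖θ 0 - θstar‖ ^ 2) = ‖θ 0 - θstar‖ ^ 2 := by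
      linear_combination 8 * ‖θ 0 - θstar‖ ^ 2 * hηs
    exact le_of_mul_le_mul_left (h2.trans h3.ge) hη0
  have hδ : ∑ t ∈ Finset.range T, ∑ i, ((1 / (M : ℝ)) - w t i) * (f i (θ t) - f i θstar)
      = (1 / (M : ℝ)) * ∑ i, (∑ t ∈ Finset.range T, f i (θ t) - T * f i θstar)
        - ∑ t ∈ Finset.range T, H t := by
    have : ∀ i, (∑ t ∈ Finset.range T, f i (θ t) - T * f i θstar)
        = ∑ t ∈ Finset.range T, (f i (θ t) - f i θstar) := by
      intro i; simp
    simp_rw [this]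
    rw [Finset.sum_comm (s := Finset.univ), Finset.mul_sum, ← Finset.sum_sub_distrib]
    refine Finset.sum_congr rfl fun t _ => ?_
    simp only [H]
    rw [Finset.mul_sum, ← Finset.sum_sub_distrib]
    exact Finset.sum_congr rfl fun i _ => by ring
  have hJ : (T : ℝ) * ((1 / (M : ℝ)) * ∑ i, f i ((1 / (T : ℝ)) • ∑ t ∈ Finset.range T, θ t)
        - (1 / (M : ℝ)) * ∑ i, f i θstar)
      ≤ (1 / (M : ℝ)) * ∑ i, (∑ t ∈ Finset.range T, f i (θ t) - T * f i θstar) := by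
    rw [← mul_sub, mul_left_comm, ← Finset.sum_sub_distrib, Finset.mul_sum]
    refine mul_le_mul_of_nonneg_left (Finset.sum_le_sum fun i _ => ?_) (by positivity)
    have := aux_jensen (f i) (gradient (f i)) (hconv i) T hT θ
    linarith
  refine le_of_mul_le_mul_left (hJ.trans ?_) hT'
  rw [hδ, mul_add, ← mul_assoc (T : ℝ) (1 / (T : ℝ)), mul_one_div_cancel hT'.ne', one_mul]
  have : (T : ℝ) * (8 * L * ‖θ 0 - θstar‖ ^ 2 / s) = 8 * L * s * ‖θ 0 - θstar‖ ^ 2 := by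
    rw [← hss]; field_simp
  linarith
end

section
/- Under the interpolation setting, let T ≥ 1, λ_t = t/2 for t ≥ 0, step size η = 1/(8L√(T+1)), and at each step t weights w_{i,t} ≥ 0 with Σ_{i=1}^M w_{i,t} = 1 and max_i w_{i,t} ≤ 2/M. Define the momentum iterates by θ^{−1} = θ^0, z^0 = θ^0, z^{t+1} = z^t − η·Σ_{i=1}^M w_{i,t} ∇f_i(θ^t), and θ^{t+1} = (λ_{t+1}·θ^t + z^{t+1})/(1 + λ_{t+1}). Then f(θ^T) − f(θ*) ≤ 8L‖θ^0 − θ*‖²/√(T+1) + (2/(T+1))·Σ_{t=0}^{T−1} δ_t + (2/(T+1))·Σ_{t=0}^{T−1} λ_t·μ_t, where δ_t = Σ_{i=1}^M (1/M − w_{i,t})·(f_i(θ^t) − f_i(θ*)) and μ_t = Σ_{i=1}^M (1/M − w_{i,t})·(f_i(θ^t) − f_i(θ^{t−1})). -/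
open scoped InnerProductSpace BigOperators

section helpers
variable {E : Type*} [NormedAddCommGroup E] [InnerProductSpace ℝ E]

lemma aux_descent (L : ℝ) (f : E → ℝ) (G : E → E)
    (hconv : ∀ a b : E, f b + ⟪G b, a - b⟫_ℝ ≤ f a)
    (hs : ∀ a b : E, ‖G a - G b‖ ≤ L * ‖a - b‖) (x y : E) :
    f y ≤ f x + ⟪G x, y - x⟫_ℝ + L * ‖y - x‖ ^ 2 := by
  have h1 := hconv x y
  have h2 := real_inner_le_norm (G y - G x) (y - x)
  have h3 := mul_le_mul_of_nonneg_right (hs y x) (norm_nonneg (y - x))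
  rw [inner_sub_left] at h2
  have h4 : ⟪G y, x - y⟫_ℝ = - ⟪G y, y - x⟫_ℝ := by
    rw [← inner_neg_right, neg_sub]
  nlinarith

lemma aux_gradbound (L : ℝ) (hL : 0 < L) (f : E → ℝ) (G : E → E)
    (hconv : ∀ a b : E, f b + ⟪G b, a - b⟫_ℝ ≤ f a)
    (hs : ∀ a b : E, ‖G a - G b‖ ≤ L * ‖a - b‖) (xs : E) (hmin : ∀ x, f xs ≤ f x) (x : E) :
    ‖G x‖ ^ 2 ≤ 4 * L * (f x - f xs) := by
  have h1 := aux_descent L f G hconv hs x (x - (1 / (2 * L)) • G x)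
  have h2 := hmin (x - (1 / (2 * L)) • G x)
  have h3 : x - (1 / (2 * L)) • G x - x = - ((1 / (2 * L)) • G x) := by abel
  rw [h3, inner_neg_right, inner_smul_right, real_inner_self_eq_norm_sq, norm_neg, norm_smul,
    mul_pow, Real.norm_eq_abs, sq_abs] at h1
  have h4 : f xs ≤ f x - ‖G x‖ ^ 2 / (4 * L) := by
    have : -(1 / (2 * L) * ‖G x‖ ^ 2) + L * ((1 / (2 * L)) ^ 2 * ‖G x‖ ^ 2)
        = - (‖G x‖ ^ 2 / (4 * L)) := by field_simp; ring
    linarith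
  have h5 : ‖G x‖ ^ 2 / (4 * L) ≤ f x - f xs := by linarith
  rw [div_le_iff₀ (by positivity)] at h5
  linarith

lemma aux_quad (L : ℝ) (hL : 0 < L) (f : E → ℝ) (G : E → E)
    (hconv : ∀ a b : E, f b + ⟪G b, a - b⟫_ℝ ≤ f a)
    (hs : ∀ a b : E, ‖G a - G b‖ ≤ L * ‖a - b‖) (xs : E) (hmin : ∀ x, f xs ≤ f x) (x : E) :
    f x - f xs ≤ L * ‖x - xs‖ ^ 2 := by
  have h0 := aux_gradbound L hL f G hconv hs xs hmin xs
  rw [sub_self, mul_zero] at h0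
  have h00 : G xs = 0 := by
    rw [← norm_eq_zero]
    exact pow_eq_zero_iff (two_ne_zero) |>.1 (le_antisymm h0 (sq_nonneg _))
  have h1 := aux_descent L f G hconv hs xs x
  rw [h00, inner_zero_left] at h1
  linarith

lemma aux_jensen_s11 {M : ℕ} (w : Fin M → ℝ) (h0 : ∀ i, 0 ≤ w i) (h1 : ∑ i, w i = 1)
    (v : Fin M → E) : ‖∑ i, w i • v i‖ ^ 2 ≤ ∑ i, w i * ‖v i‖ ^ 2 := by
  set g := ∑ i, w i • v i with hg
  have h : ‖g‖ ^ 2 = ∑ i, w i * ⟪v i, g⟫_ℝ := by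
    rw [← real_inner_self_eq_norm_sq]
    nth_rewrite 1 [hg]
    rw [sum_inner]
    exact Finset.sum_congr rfl fun i _ => real_inner_smul_left _ _ _
  have h2 : ∑ i, w i * ⟪v i, g⟫_ℝ ≤ ∑ i, w i * ((‖v i‖ ^ 2 + ‖g‖ ^ 2) / 2) := by
    refine Finset.sum_le_sum fun i _ => mul_le_mul_of_nonneg_left ?_ (h0 i)
    have := real_inner_le_norm (v i) g
    nlinarith [sq_nonneg (‖v i‖ - ‖g‖)]
  have h3 : ∑ i, w i * ((‖v i‖ ^ 2 + ‖g‖ ^ 2) / 2)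
      = (∑ i, w i * ‖v i‖ ^ 2) / 2 + (∑ i, w i) * ‖g‖ ^ 2 / 2 := by
    rw [Finset.sum_mul, Finset.sum_div, Finset.sum_div, ← Finset.sum_add_distrib]
    exact Finset.sum_congr rfl fun i _ => by ring
  rw [h1] at h3
  linarith

/-- Weighted first-order convexity, stated with differences. -/
lemma aux_wconv {M : ℕ} (w : Fin M → ℝ) (h0 : ∀ i, 0 ≤ w i)
    (f : Fin M → E → ℝ) (G : Fin M → E → E)
    (hconv : ∀ i, ∀ a b : E, f i b + ⟪G i b, a - b⟫_ℝ ≤ f i a) (x y : E) :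
    ∑ i, w i * (f i x - f i y) ≤ ⟪∑ i, w i • G i x, x - y⟫_ℝ := by
  rw [sum_inner]
  refine Finset.sum_le_sum fun i _ => ?_
  rw [real_inner_smul_left]
  refine mul_le_mul_of_nonneg_left ?_ (h0 i)
  have h := hconv i y x
  have h4 : ⟪G i x, y - x⟫_ℝ = - ⟪G i x, x - y⟫_ℝ := by
    rw [← inner_neg_right, neg_sub]
  linarith

end helpers

/-- Reweighted full-batch gradient descent with heavy-ball momentum
(`λ_t = t/2`, `η = 1/(8L√(T+1))`) under the interpolation regime: convergence
bound with the reweighting excess terms `δ_t` and `μ_t`.  Here `θ (t - 1)` with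
natural subtraction encodes the convention `θ^{-1} = θ^0`. -/
theorem stmt_11 {d M : ℕ} (hM : 0 < M) (L : ℝ) (hL : 0 < L)
    (f : Fin M → EuclideanSpace ℝ (Fin d) → ℝ)
    (hdiff : ∀ i, Differentiable ℝ (f i))
    (hconv : ∀ i, ∀ θ₁ θ₂ : EuclideanSpace ℝ (Fin d),
      f i θ₂ + ⟪gradient (f i) θ₂, θ₁ - θ₂⟫_ℝ ≤ f i θ₁)
    (hsmooth : ∀ i, ∀ θ θ' : EuclideanSpace ℝ (Fin d),
      ‖gradient (f i) θ - gradient (f i) θ'‖ ≤ L * ‖θ - θ'‖)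
    (θstar : EuclideanSpace ℝ (Fin d))
    (hinterp : ∀ i θ, f i θstar ≤ f i θ)
    (T : ℕ) (hT : 1 ≤ T)
    (lam : ℕ → ℝ) (hlam : ∀ t, lam t = (t : ℝ) / 2)
    (η : ℝ) (hη : η = 1 / (8 * L * Real.sqrt ((T : ℝ) + 1)))
    (w : ℕ → Fin M → ℝ)
    (hw0 : ∀ t i, 0 ≤ w t i)
    (hw1 : ∀ t, ∑ i, w t i = 1)
    (hwmax : ∀ t i, w t i ≤ 2 / (M : ℝ))
    (θ z : ℕ → EuclideanSpace ℝ (Fin d))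
    (hz0 : z 0 = θ 0)
    (hzupd : ∀ t, z (t + 1) = z t - η • ∑ i, w t i • gradient (f i) (θ t))
    (hθupd : ∀ t, θ (t + 1)
      = (1 / (1 + lam (t + 1))) • (lam (t + 1) • θ t + z (t + 1))) :
    (1 / (M : ℝ)) * ∑ i, f i (θ T) - (1 / (M : ℝ)) * ∑ i, f i θstar
      ≤ 8 * L * ‖θ 0 - θstar‖ ^ 2 / Real.sqrt ((T : ℝ) + 1)
        + (2 / ((T : ℝ) + 1)) * ∑ t ∈ Finset.range T,
            ∑ i, ((1 / (M : ℝ)) - w t i) * (f i (θ t) - f i θstar)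
        + (2 / ((T : ℝ) + 1)) * ∑ t ∈ Finset.range T,
            lam t * ∑ i, ((1 / (M : ℝ)) - w t i) * (f i (θ t) - f i (θ (t - 1))) := by
  have hM' : (0:ℝ) < M := by exact_mod_cast hM
  set G : Fin M → EuclideanSpace ℝ (Fin d) → EuclideanSpace ℝ (Fin d) :=
    fun i => gradient (f i) with hG
  set s := Real.sqrt ((T : ℝ) + 1) with hs
  have hs1 : 1 ≤ s := by
    rw [hs, Real.one_le_sqrt]; have : (0:ℝ) ≤ T := Nat.cast_nonneg T
    linarith
  have hs2 : s ^ 2 = (T : ℝ) + 1 := Real.sq_sqrt (by positivity)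
  have hηpos : 0 < η := by rw [hη]; positivity
  have hη1 : 8 * L * s * η = 1 := by rw [hη]; field_simp
  have hηL : η * L ≤ 1 / 8 := by nlinarith [mul_pos hηpos hL]
  -- the average suboptimality
  set D : EuclideanSpace ℝ (Fin d) → ℝ := fun x => ∑ i, (1 / (M : ℝ)) * (f i x - f i θstar) with hD
  have hDnn : ∀ x, 0 ≤ D x := fun x => Finset.sum_nonneg fun i _ =>
    mul_nonneg (by positivity) (by linarith [hinterp i x])
  have hDeq : ∀ x, (1 / (M : ℝ)) * ∑ i, f i x - (1 / (M : ℝ)) * ∑ i, f i θstar = D x := by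
    intro x
    simp only [hD]
    rw [← Finset.mul_sum, Finset.sum_sub_distrib]; ring
  set δ : ℕ → ℝ := fun t => ∑ i, ((1 / (M : ℝ)) - w t i) * (f i (θ t) - f i θstar) with hδ
  set μ : ℕ → ℝ := fun t => ∑ i, ((1 / (M : ℝ)) - w t i) * (f i (θ t) - f i (θ (t - 1))) with hμ
  set g : ℕ → EuclideanSpace ℝ (Fin d) := fun t => ∑ i, w t i • G i (θ t) with hg
  have hlam0 : ∀ t, 0 ≤ lam t := fun t => by rw [hlam]; positivity
  -- z in terms of θ
  have hz : ∀ t, z t - θstar = (θ t - θstar) + lam t • (θ t - θ (t - 1)) := by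
    intro t
    cases t with
    | zero => simp [hlam, hz0]
    | succ n =>
      have h1 : (1 + lam (n + 1)) • θ (n + 1) = lam (n + 1) • θ n + z (n + 1) := by
        rw [hθupd n, smul_smul, mul_one_div_cancel (by linarith [hlam0 (n + 1)]), one_smul]
      have h2 : z (n + 1) = (1 + lam (n + 1)) • θ (n + 1) - lam (n + 1) • θ n := by
        rw [h1]; abel
      rw [h2, Nat.add_sub_cancel]
      module
  have hgb : ∀ t, ‖g t‖ ^ 2 ≤ 8 * L * D (θ t) := by
    intro t
    refine (aux_jensen_s11 (w t) (hw0 t) (hw1 t) _).trans ?_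
    simp only [hD]
    rw [Finset.mul_sum]
    refine Finset.sum_le_sum fun i _ => ?_
    have h1 := aux_gradbound L hL (f i) (G i) (hconv i) (hsmooth i) θstar (hinterp i) (θ t)
    calc w t i * ‖G i (θ t)‖ ^ 2 ≤ 2 / (M : ℝ) * (4 * L * (f i (θ t) - f i θstar)) :=
          mul_le_mul (hwmax t i) h1 (by positivity) (by positivity)
      _ = _ := by ring
  have hin : ∀ t, D (θ t) - δ t + lam t * (D (θ t) - D (θ (t - 1)) - μ t)
      ≤ ⟪g t, z t - θstar⟫_ℝ := by
    intro t
    rw [hz t, inner_add_right, inner_smul_right]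
    have h1 := aux_wconv (w t) (hw0 t) f G hconv (θ t) θstar
    have h2 := aux_wconv (w t) (hw0 t) f G hconv (θ t) (θ (t - 1))
    have e1 : D (θ t) - δ t = ∑ i, w t i * (f i (θ t) - f i θstar) := by
      simp only [hD, hδ]
      rw [← Finset.sum_sub_distrib]
      exact Finset.sum_congr rfl fun i _ => by ring
    have e2 : D (θ t) - D (θ (t - 1)) - μ t = ∑ i, w t i * (f i (θ t) - f i (θ (t - 1))) := by
      simp only [hD, hμ]
      rw [← Finset.sum_sub_distrib, ← Finset.sum_sub_distrib]
      exact Finset.sum_congr rfl fun i _ => by ring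
    rw [e1, e2]
    exact add_le_add h1 (mul_le_mul_of_nonneg_left h2 (hlam0 t))
  have key : ∀ n, 2 * η * (lam n * D (θ (n - 1))) + ‖z n - θstar‖ ^ 2
      ≤ ‖θ 0 - θstar‖ ^ 2 + 2 * η * (∑ t ∈ Finset.range n, δ t
        + ∑ t ∈ Finset.range n, lam t * μ t) := by
    intro n
    induction n with
    | zero => simp [hlam, hz0]
    | succ n ih =>
      rw [Finset.sum_range_succ, Finset.sum_range_succ, Nat.add_sub_cancel]
      have e : ‖z (n + 1) - θstar‖ ^ 2
          = ‖z n - θstar‖ ^ 2 - 2 * η * ⟪g n, z n - θstar⟫_ℝ + η ^ 2 * ‖g n‖ ^ 2 := by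
        have : z (n + 1) - θstar = (z n - θstar) - η • g n := by
          rw [hzupd n]; simp only [hg, hG]; abel
        rw [this, norm_sub_sq_real, inner_smul_right, norm_smul, real_inner_comm, mul_pow,
          Real.norm_eq_abs, sq_abs]
        ring
      have h1 := mul_le_mul_of_nonneg_left (hin n) (by positivity : 0 ≤ 2 * η)
      have h2 := mul_le_mul_of_nonneg_left (hgb n) (by positivity : 0 ≤ η ^ 2)
      have h3 : η ^ 2 * (8 * L * D (θ n)) ≤ η * D (θ n) := by
        have := mul_le_mul_of_nonneg_left hηL (mul_nonneg hηpos.le (hDnn (θ n)))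
        nlinarith
      have h4 : lam (n + 1) = lam n + 1 / 2 := by
        rw [hlam, hlam]; push_cast; ring
      rw [e, h4]
      nlinarith
  have hk := key T
  obtain ⟨n, rfl⟩ : ∃ n, T = n + 1 := ⟨T - 1, by omega⟩
  set T := n + 1 with hTn
  -- final step
  have hfin : (1 + lam T) * D (θ T) ≤ lam T * D (θ (T - 1)) + L * ‖z T - θstar‖ ^ 2 := by
    have hvec : lam T • (θ (T - 1) - θ T) + (z T - θ T) = 0 := by
      have h := hz T
      have h2 : z T - θ T = (z T - θstar) - (θ T - θstar) := by abel
      rw [h2, h]; module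
    have hz' : D (z T) ≤ L * ‖z T - θstar‖ ^ 2 := by
      calc D (z T) ≤ ∑ i : Fin M, (1 / (M : ℝ)) * (L * ‖z T - θstar‖ ^ 2) :=
            Finset.sum_le_sum fun i _ => mul_le_mul_of_nonneg_left
              (aux_quad L hL (f i) (G i) (hconv i) (hsmooth i) θstar (hinterp i) (z T))
              (by positivity)
        _ = _ := by
            rw [Finset.sum_const, Finset.card_univ, Fintype.card_fin, nsmul_eq_mul]
            field_simp
    have hc : (1 + lam T) * D (θ T) ≤ lam T * D (θ (T - 1)) + D (z T) := by
      simp only [hD]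
      rw [Finset.mul_sum, Finset.mul_sum, ← Finset.sum_add_distrib]
      refine Finset.sum_le_sum fun i _ => ?_
      have h1 := mul_le_mul_of_nonneg_left (hconv i (θ (T - 1)) (θ T)) (hlam0 T)
      have h2 := hconv i (z T) (θ T)
      have h3 : lam T * ⟪G i (θ T), θ (T - 1) - θ T⟫_ℝ + ⟪G i (θ T), z T - θ T⟫_ℝ = 0 := by
        rw [← inner_smul_right, ← inner_add_right, hvec, inner_zero_right]
      simp only [hG] at h3
      have h4 : (1 + lam T) * (f i (θ T) - f i θstar)
          ≤ lam T * (f i (θ (T - 1)) - f i θstar) + (f i (z T) - f i θstar) := by linarith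
      have h5 := mul_le_mul_of_nonneg_left h4 (by positivity : 0 ≤ 1 / (M : ℝ))
      linarith
    linarith
  have hfin2 : 2 * η * ((1 + lam T) * D (θ T)) ≤ ‖θ 0 - θstar‖ ^ 2
      + 2 * η * (∑ t ∈ Finset.range T, δ t + ∑ t ∈ Finset.range T, lam t * μ t) := by
    have h1 := mul_le_mul_of_nonneg_left hfin (by positivity : 0 ≤ 2 * η)
    have h2 := mul_le_mul_of_nonneg_right hηL (sq_nonneg ‖z T - θstar‖)
    nlinarith [sq_nonneg ‖z T - θstar‖]
  rw [hDeq]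
  have hTpos : (0 : ℝ) < (T : ℝ) + 1 := by positivity
  have hlT := hlam T
  set S1 := ∑ t ∈ Finset.range T, δ t
  set S2 := ∑ t ∈ Finset.range T, lam t * μ t
  set R := ‖θ 0 - θstar‖ ^ 2
  have h6 : (1 + lam T) * D (θ T) ≤ 4 * L * s * R + (S1 + S2) := by
    have h := mul_le_mul_of_nonneg_left hfin2 (by positivity : 0 ≤ 4 * L * s)
    have e1 : 4 * L * s * (2 * η * ((1 + lam T) * D (θ T))) = (1 + lam T) * D (θ T) := by
      linear_combination ((1 + lam T) * D (θ T)) * hη1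
    have e2 : 4 * L * s * (R + 2 * η * (S1 + S2)) = 4 * L * s * R + (S1 + S2) := by
      linear_combination (S1 + S2) * hη1
    linarith
  have h7 : ((T : ℝ) + 1) / 2 * D (θ T) ≤ 4 * L * s * R + (S1 + S2) := by
    rw [hlT] at h6
    nlinarith [hDnn (θ T)]
  have h8 : 8 * L * R / s + 2 / ((T : ℝ) + 1) * S1 + 2 / ((T : ℝ) + 1) * S2
      = 2 / ((T : ℝ) + 1) * (4 * L * s * R + (S1 + S2)) := by
    rw [← hs2]
    field_simp
    ring
  rw [h8]
  have h9 := mul_le_mul_of_nonneg_left h7 (by positivity : 0 ≤ 2 / ((T : ℝ) + 1))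
  have e3 : 2 / ((T : ℝ) + 1) * (((T : ℝ) + 1) / 2 * D (θ T)) = D (θ T) := by field_simp
  linarith
end
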